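/- Let f : ℝ → ℝ be a continuous map. Then the set P(f) of periods of all cycles of f is either empty or equal to the initial segment S(n) of the Sharkovsky ordering for some n in ℕ ∪ {2^∞}. -/

import Mathlib

/-- The odd part of a natural number: `n = 2^k * oddPart n` with `oddPart n` odd (for `n ≠ 0`). -/
def oddPart (n : ℕ) : ℕ := n / 2 ^ (n.factorization 2)

/-- The Sharkovsky ordering `a <ₛ b`: powers of 2 in increasing order come first,
then for each dyadic level (in decreasing order of the power of 2) the numbers
`2^k * odd` in decreasing order of the odd part, the odd numbers `> 1` being the largest. -/
def SharkLt (a b : ℕ) : Prop :=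
  (oddPart a = 1 ∧ oddPart b = 1 ∧ a < b) ∨
  (oddPart a = 1 ∧ oddPart b ≠ 1) ∨
  (oddPart a ≠ 1 ∧ oddPart b ≠ 1 ∧
    (b.factorization 2 < a.factorization 2 ∨
      (a.factorization 2 = b.factorization 2 ∧ oddPart b < oddPart a)))

/-- The initial segment `S(n) = {m : m <ₛ n} ∪ {n}` of the Sharkovsky ordering. -/
def sharkSegment (n : ℕ) : Set ℕ := {m | SharkLt m n ∨ m = n}

/-- The set of (minimal) periods of all cycles of `f` lying in `I`. -/
def periodsOn (f : ℝ → ℝ) (I : Set ℝ) : Set ℕ :=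
  {n | 0 < n ∧ ∃ x ∈ I, Function.minimalPeriod f x = n}

/-!
Call a cyclic sequence of intervals a loop if the image of each endpoint pair spans the next
interval; by the intermediate value theorem a loop of length `n` is followed by a periodic point `x`
with `f^[n] x = x`. All loops needed here, apart from one of length two, are pinned at a fixed point
`z`: one endpoint of each interval is mapped to `z`, so only the orbit of the other endpoint has to
be prescribed.

A cycle of period at least two has a center, a fixed point `z` between two adjacent points `p < q`
of the cycle with `f q ≤ p` and `q ≤ f p`. If `f` exchanges the two sides of `z` on the cycle, the
period is even and a loop between the two sides gives period two. Otherwise some point of the cycle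
stays on its side of `z`, so by continuity a point `v` on that side is mapped to `z`. Pinning loops
at `z` and `v` yields all even periods and, starting from the least odd period `n > 1`, all larger
odd ones. The remaining cases of the Sharkovsky ordering follow by applying this to the iterates
`f^[2 ^ k]`.
-/

open Set Function OrderDual

section Periods

variable {X Y : Type*} {f : X → X} {n : ℕ} {P : Set X}

/-- The set of (minimal) periods of all cycles of `f`; positivity excludes `0`, which is the
`minimalPeriod` of the points that are not periodic. -/
def periods (f : X → X) : Set ℕ :=
  {n | 0 < n ∧ ∃ x, minimalPeriod f x = n}

theorem mem_periods_of_isPeriodicPt {x : X} (hn : 0 < n) (hx : IsPeriodicPt f n x)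
    (h : ∀ d ∈ periods f, d ∣ n → d < n → f^[d] x ≠ x) : n ∈ periods f := by
  refine ⟨hn, x, by_contra fun hne => ?_⟩
  exact h (minimalPeriod f x) ⟨hx.minimalPeriod_pos hn, x, rfl⟩ hx.minimalPeriod_dvd
    ((hx.minimalPeriod_le hn).lt_of_ne hne) iterate_minimalPeriod

/-- `P` is a cycle of `f` of period `n`, that is, the orbit of a point of minimal period `n`. -/
structure IsCycle (f : X → X) (n : ℕ) (P : Set X) : Prop where
  finite : P.Finite
  nonempty : P.Nonempty
  mapsTo : MapsTo f P P
  exists_iterate_eq : ∀ x ∈ P, ∀ y ∈ P, ∃ i < n, f^[i] x = y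
  minimalPeriod_eq : ∀ x ∈ P, minimalPeriod f x = n

theorem exists_isCycle (hn : n ∈ periods f) : ∃ P, IsCycle f n P := by
  obtain ⟨hpos, x, rfl⟩ := hn
  set n := minimalPeriod f x
  have mem_orbit (i : ℕ) : f^[i] x ∈ (f^[·] x) '' Iio n :=
    ⟨i % n, Nat.mod_lt _ hpos, iterate_mod_minimalPeriod_eq⟩
  refine ⟨(f^[·] x) '' Iio n, (finite_Iio n).image _, ⟨x, mem_orbit 0⟩, ?_, ?_, ?_⟩
  · rintro _ ⟨i, -, rfl⟩
    simpa only [iterate_succ_apply'] using mem_orbit (i + 1)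
  · rintro _ ⟨i, hi, rfl⟩ _ ⟨j, -, rfl⟩
    refine ⟨(j + (n - i)) % n, Nat.mod_lt _ hpos, ?_⟩
    have hsum : j + (n - i) + i = j + n := by have := mem_Iio.1 hi; omega
    calc f^[(j + (n - i)) % n] (f^[i] x) = f^[j + n] x := by
          rw [← iterate_add_apply, ← iterate_mod_minimalPeriod_eq, Nat.mod_add_mod, hsum,
            iterate_mod_minimalPeriod_eq]
      _ = f^[j] x := iterate_add_minimalPeriod_eq
  · rintro _ ⟨i, -, rfl⟩
    exact minimalPeriod_apply_iterate (minimalPeriod_pos_iff_mem_periodicPts.1 hpos) i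

namespace IsCycle

theorem isPeriodicPt (hP : IsCycle f n P) {x : X} (hx : x ∈ P) : IsPeriodicPt f n x :=
  hP.minimalPeriod_eq x hx ▸ isPeriodicPt_minimalPeriod f x

theorem apply_ne (hP : IsCycle f n P) (hn : 1 < n) {x : X} (hx : x ∈ P) : f x ≠ x := fun hfx =>
  hn.ne ((minimalPeriod_eq_one_iff_isFixedPt.2 hfx).symm.trans (hP.minimalPeriod_eq x hx))

theorem surjOn (hP : IsCycle f n P) : SurjOn f P P := by
  intro y hy
  obtain ⟨i, -, hi⟩ := hP.exists_iterate_eq (f y) (hP.mapsTo hy) y hy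
  exact ⟨f^[i] y, hP.mapsTo.iterate i hy, by rw [← iterate_succ_apply' f, iterate_succ_apply, hi]⟩

theorem exists_mem_apply_notMem (hP : IsCycle f n P) {S : Set X} (hS : (P ∩ S).Nonempty)
    (hPS : ¬P ⊆ S) : ∃ x ∈ P ∩ S, f x ∉ S := by
  obtain ⟨x, hxP, hxS⟩ := hS
  obtain ⟨y, hyP, hyS⟩ := not_subset.1 hPS
  by_contra! hclosed
  have hmaps : MapsTo f (P ∩ S) (P ∩ S) := fun t ht => ⟨hP.mapsTo ht.1, hclosed t ht⟩
  obtain ⟨i, -, rfl⟩ := hP.exists_iterate_eq x hxP y hyP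
  exact hyS (hmaps.iterate i ⟨hxP, hxS⟩).2

end IsCycle

theorem iterate_conj_apply (e : X ≃ Y) (f : X → X) (i : ℕ) (x : X) :
    (e.conj f)^[i] (e x) = e (f^[i] x) :=
  ((e.semiconj_conj f).iterate_right i x).symm

theorem minimalPeriod_conj (e : X ≃ Y) (f : X → X) (x : X) :
    minimalPeriod (e.conj f) (e x) = minimalPeriod f x := by
  simp only [minimalPeriod_eq_minimalPeriod_iff, IsPeriodicPt, IsFixedPt, iterate_conj_apply,
    e.apply_eq_iff_eq, implies_true]

theorem periods_conj (e : X ≃ Y) (f : X → X) : periods (e.conj f) = periods f := by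
  ext n
  simp only [periods, mem_ofPred_eq, e.surjective.exists, minimalPeriod_conj]

theorem IsCycle.conj (hP : IsCycle f n P) (e : X ≃ Y) : IsCycle (e.conj f) n (e '' P) where
  finite := hP.finite.image e
  nonempty := hP.nonempty.image e
  mapsTo := by
    rintro _ ⟨x, hx, rfl⟩
    exact ⟨f x, hP.mapsTo hx, ((e.semiconj_conj f) x)⟩
  exists_iterate_eq := by
    rintro _ ⟨x, hx, rfl⟩ _ ⟨y, hy, rfl⟩
    obtain ⟨i, hi, rfl⟩ := hP.exists_iterate_eq x hx y hy
    exact ⟨i, hi, iterate_conj_apply e f i x⟩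
  minimalPeriod_eq := by
    rintro _ ⟨x, hx, rfl⟩
    rw [minimalPeriod_conj, hP.minimalPeriod_eq x hx]

end Periods

section IterateOfPeriod

variable {X : Type*} {f : X → X} {k m n : ℕ}

theorem div_gcd_mem_periods_iterate (hm : 0 < m) (hn : n ∈ periods f) :
    n / n.gcd m ∈ periods f^[m] := by
  obtain ⟨hpos, x, rfl⟩ := hn
  exact ⟨Nat.div_gcd_pos_of_pos_left _ hpos, x, minimalPeriod_iterate_eq_div_gcd hm.ne'⟩

theorem mem_periods_iterate_of_mul_mem (hm : 0 < m) (h : m * n ∈ periods f) :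
    n ∈ periods f^[m] := by
  simpa only [Nat.gcd_mul_right_left, Nat.mul_div_cancel_left n hm] using
    div_gcd_mem_periods_iterate hm h

theorem exists_mul_mem_periods_of_iterate (hm : 0 < m) (hn : n ∈ periods f^[m]) :
    ∃ d, d * n ∈ periods f ∧ (d * n).gcd m = d := by
  obtain ⟨hpos, x, rfl⟩ := hn
  rw [minimalPeriod_iterate_eq_div_gcd hm.ne'] at hpos ⊢
  have hmul := Nat.mul_div_cancel' (Nat.gcd_dvd_left (minimalPeriod f x) m)
  refine ⟨(minimalPeriod f x).gcd m, ?_, by rw [hmul]⟩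
  rw [hmul]
  exact ⟨Nat.pos_of_ne_zero fun h => by simp [h] at hpos, x, rfl⟩

theorem two_pow_mul_mem_periods_of_even (hn : Even n) (h : n ∈ periods f^[2 ^ k]) :
    2 ^ k * n ∈ periods f := by
  obtain ⟨d, hd, hgcd⟩ := exists_mul_mem_periods_of_iterate (by positivity) h
  obtain ⟨j, hjk, rfl⟩ := (Nat.dvd_prime_pow Nat.prime_two).1 (hgcd ▸ Nat.gcd_dvd_right _ _)
  obtain rfl | hlt := hjk.eq_or_lt
  · exact hd
  · have hdvd : 2 ^ (j + 1) ∣ 2 ^ j :=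
      hgcd ▸ Nat.dvd_gcd (pow_succ 2 j ▸ Nat.mul_dvd_mul_left _ hn.two_dvd) (pow_dvd_pow 2 hlt)
    exact absurd (Nat.le_of_dvd (by positivity) hdvd) (by simp [pow_succ])

end IterateOfPeriod

section Loops

variable {X Y : Type*} [ConditionallyCompleteLinearOrder X] [TopologicalSpace X]
  [OrderTopology X] [DenselyOrdered X] [LinearOrder Y] [TopologicalSpace Y]
  [OrderClosedTopology Y]

theorem exists_last_preimage {f : X → Y} (hf : Continuous f) {u v : X} {z : Y} (huv : u ≤ v)
    (hu : f u ≤ z) (hv : z ≤ f v) : ∃ c ∈ Icc u v, f c = z ∧ ∀ t ∈ Ioc c v, z < f t := by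
  have hcompact : IsCompact (Icc u v ∩ f ⁻¹' {z}) :=
    isCompact_Icc.inter_right (isClosed_singleton.preimage hf)
  obtain ⟨c, ⟨hc, hcz⟩, hmax⟩ :=
    hcompact.exists_isGreatest (intermediate_value_Icc huv hf.continuousOn ⟨hu, hv⟩)
  refine ⟨c, hc, hcz, fun t ht => ?_⟩
  by_contra! htz
  obtain ⟨s, hs, hsz⟩ := intermediate_value_Icc ht.2 hf.continuousOn ⟨htz, hv⟩
  exact ((hmax ⟨⟨hc.1.trans (ht.1.le.trans hs.1), hs.2⟩, hsz⟩).trans_lt ht.1).not_ge hs.1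

theorem exists_Icc_mapsTo_Icc {f : X → Y} (hf : Continuous f) {u v : X} (huv : u ≤ v)
    (hfuv : f u ≤ f v) : ∃ c d, c ≤ d ∧ Icc c d ⊆ Icc u v ∧ f c = f u ∧ f d = f v ∧
      MapsTo f (Icc c d) (Icc (f u) (f v)) := by
  obtain ⟨d, hd, hdv, hlt⟩ : ∃ d ∈ Icc u v, f d = f v ∧ ∀ t ∈ Ico u d, f t < f v := by
    obtain ⟨d, hd, hdv, hlt⟩ := exists_last_preimage
      (f := toDual ∘ f ∘ ofDual) (continuous_toDual.comp (hf.comp continuous_ofDual))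
      (u := toDual v) (v := toDual u) (z := toDual (f v)) huv le_rfl hfuv
    exact ⟨ofDual d, ⟨hd.2, hd.1⟩, hdv, fun t ht => hlt (toDual t) ⟨ht.2, ht.1⟩⟩
  obtain ⟨c, hc, hcu, hgt⟩ := exists_last_preimage hf hd.1 le_rfl (hdv.symm ▸ hfuv)
  refine ⟨c, d, hc.2, Icc_subset_Icc hc.1 hd.2, hcu, hdv, fun t ht => ⟨?_, ?_⟩⟩
  · obtain rfl | hct := ht.1.eq_or_lt
    exacts [hcu.ge, (hgt t ⟨hct, ht.2⟩).le]
  · obtain rfl | htd := ht.2.eq_or_lt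
    exacts [hdv.le, (hlt t ⟨hc.1.trans ht.1, htd⟩).le]

theorem exists_uIcc_mapsTo_uIcc {f : X → Y} (hf : Continuous f) (u v : X) :
    ∃ c d, uIcc c d ⊆ uIcc u v ∧ f c = f u ∧ f d = f v ∧
      MapsTo f (uIcc c d) (uIcc (f u) (f v)) := by
  wlog huv : u ≤ v generalizing u v
  · obtain ⟨c, d, hsub, hc, hd, hmaps⟩ := this v u (le_of_not_ge huv)
    exact ⟨d, c, by rwa [uIcc_comm d, uIcc_comm u], hd, hc, by rwa [uIcc_comm d, uIcc_comm (f u)]⟩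
  obtain hle | hge := le_total (f u) (f v)
  · obtain ⟨c, d, hcd, hsub, hc, hd, hmaps⟩ := exists_Icc_mapsTo_Icc hf huv hle
    refine ⟨c, d, ?_, hc, hd, ?_⟩ <;> simpa only [uIcc_of_le, hcd, huv, hle]
  · obtain ⟨c, d, hcd, hsub, hc, hd, hmaps⟩ :=
      exists_Icc_mapsTo_Icc (f := toDual ∘ f) (continuous_toDual.comp hf) huv hge
    refine ⟨c, d, by simpa only [uIcc_of_le, hcd, huv], hc, hd, ?_⟩
    rw [uIcc_of_le hcd, uIcc_of_ge hge]
    exact fun t ht => ⟨(hmaps ht).2, (hmaps ht).1⟩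

variable {f : X → X} {a b : ℕ → X} {n : ℕ}

theorem exists_uIcc_iterate_mapsTo (hf : Continuous f)
    (hstep : ∀ i < n, uIcc (a (i + 1)) (b (i + 1)) ⊆ uIcc (f (a i)) (f (b i))) :
    ∃ c d, f^[n] c = a n ∧ f^[n] d = b n ∧
      ∀ i ≤ n, MapsTo f^[i] (uIcc c d) (uIcc (a i) (b i)) := by
  induction n with
  | zero =>
    refine ⟨a 0, b 0, rfl, rfl, fun i hi => ?_⟩
    obtain rfl := Nat.le_zero.1 hi
    exact mapsTo_id _
  | succ n ih =>
    obtain ⟨c, d, hc, hd, hmaps⟩ := ih fun i hi => hstep i (hi.trans n.lt_succ_self)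
    have hcover : uIcc (a (n + 1)) (b (n + 1)) ⊆ f^[n + 1] '' uIcc c d := by
      refine (hstep n n.lt_succ_self).trans ?_
      rw [← hc, ← hd, ← iterate_succ_apply' f, ← iterate_succ_apply' f]
      exact intermediate_value_uIcc (hf.iterate _).continuousOn
    obtain ⟨u, hu, hua⟩ := hcover left_mem_uIcc
    obtain ⟨v, hv, hvb⟩ := hcover right_mem_uIcc
    obtain ⟨c', d', hsub, hc', hd', hmaps'⟩ := exists_uIcc_mapsTo_uIcc (hf.iterate (n + 1)) u v
    rw [hua, hvb] at hmaps'
    refine ⟨c', d', hc'.trans hua, hd'.trans hvb, fun i hi => ?_⟩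
    obtain rfl | hlt := hi.eq_or_lt
    · exact hmaps'
    · exact (hmaps i (Nat.lt_succ_iff.1 hlt)).mono_left (hsub.trans (uIcc_subset_uIcc hu hv))

theorem exists_isPeriodicPt_of_loop (hf : Continuous f)
    (hstep : ∀ i < n, uIcc (a (i + 1)) (b (i + 1)) ⊆ uIcc (f (a i)) (f (b i)))
    (ha : a n = a 0) (hb : b n = b 0) :
    ∃ x, IsPeriodicPt f n x ∧ ∀ i ≤ n, f^[i] x ∈ uIcc (a i) (b i) := by
  obtain ⟨c, d, hc, hd, hmaps⟩ := exists_uIcc_iterate_mapsTo hf hstep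
  have hsurj : SurjOn f^[n] (uIcc c d) (uIcc c d) := by
    refine Subset.trans ?_ (intermediate_value_uIcc (hf.iterate n).continuousOn)
    rw [hc, hd, ha, hb]
    exact uIcc_subset_uIcc (hmaps 0 n.zero_le left_mem_uIcc) (hmaps 0 n.zero_le right_mem_uIcc)
  obtain ⟨x, hx, hfix⟩ := exists_mem_uIcc_isFixedPt_of_surjOn (hf.iterate n).continuousOn hsurj
  exact ⟨x, hfix, fun i hi => hmaps i hi hx⟩

theorem exists_isPeriodicPt_of_pinned_loop {z : X} (hf : Continuous f)
    (hz : ∀ i < n, f (a i) = z) (ha : ∀ i < n, a (i + 1) ∈ uIcc z (f (b i)))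
    (hb : ∀ i < n, b (i + 1) ∈ uIcc z (f (b i))) (han : a n = a 0) (hbn : b n = b 0) :
    ∃ x, IsPeriodicPt f n x ∧ ∀ i ≤ n, f^[i] x ∈ uIcc (a i) (b i) :=
  exists_isPeriodicPt_of_loop hf
    (fun i hi => (hz i hi).symm ▸ uIcc_subset_uIcc (ha i hi) (hb i hi)) han hbn

end Loops

section Center

variable {X : Type*} [LinearOrder X] {f : X → X} {n : ℕ} {P : Set X} {a p q v z x : X}

/-- The fixed point `z` of `f` is a center of the finite invariant set `P`: the points `p < z < q`
of `P` next to `z` are mapped across `z`, onto or beyond each other. -/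
structure IsCenter (f : X → X) (P : Set X) (p z q : X) : Prop where
  left_mem : p ∈ P
  right_mem : q ∈ P
  left_lt : p < z
  lt_right : z < q
  isFixedPt : IsFixedPt f z
  right_le : q ≤ f p
  le_left : f q ≤ p
  le_or_le : ∀ x ∈ P, x ≤ p ∨ q ≤ x

namespace IsCenter

theorem notMem (hc : IsCenter f P p z q) : z ∉ P := fun hz =>
  (hc.le_or_le z hz).elim hc.left_lt.not_ge hc.lt_right.not_ge

theorem le_left_of_lt (hc : IsCenter f P p z q) (hx : x ∈ P) (hxz : x < z) : x ≤ p :=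
  (hc.le_or_le x hx).resolve_right fun hqx => (hxz.trans hc.lt_right).not_ge hqx

theorem dual (hc : IsCenter f P p z q) :
    IsCenter (toDual.conj f) (toDual '' P) (toDual q) (toDual z) (toDual p) where
  left_mem := mem_image_of_mem _ hc.right_mem
  right_mem := mem_image_of_mem _ hc.left_mem
  left_lt := toDual_lt_toDual.2 hc.lt_right
  lt_right := toDual_lt_toDual.2 hc.left_lt
  isFixedPt := congrArg toDual hc.isFixedPt
  right_le := by simpa using hc.le_left
  le_left := by simpa using hc.right_le
  le_or_le := by
    rintro _ ⟨x, hx, rfl⟩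
    exact (hc.le_or_le x hx).symm.imp toDual_le_toDual.2 toDual_le_toDual.2

end IsCenter

/-- `f` moves every point of `P` other than `z` to the other side of `z`. -/
def SwitchesSides (f : X → X) (P : Set X) (z : X) : Prop :=
  MapsTo f (P ∩ Iio z) (Ioi z) ∧ MapsTo f (P ∩ Ioi z) (Iio z)

theorem SwitchesSides.apply_lt_iff (h : SwitchesSides f P z) (hz : z ∉ P) (hx : x ∈ P) :
    f x < z ↔ ¬x < z := by
  refine ⟨fun hfx hxz => (h.1 ⟨hx, hxz⟩).not_gt hfx, fun hxz => h.2 ⟨hx, ?_⟩⟩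
  exact (not_lt.1 hxz).lt_of_ne fun hzx => hz (hzx ▸ hx)

theorem SwitchesSides.surjOn_left (h : SwitchesSides f P z) (hz : z ∉ P) (hP : SurjOn f P P) :
    SurjOn f (P ∩ Iio z) (P ∩ Ioi z) := by
  rintro _ ⟨hy, hzy⟩
  obtain ⟨x, hx, rfl⟩ := hP hy
  exact ⟨x, ⟨hx, not_not.1 <| mt (h.apply_lt_iff hz hx).2 (mem_Ioi.1 hzy).not_gt⟩, rfl⟩

theorem SwitchesSides.surjOn_right (h : SwitchesSides f P z) (hz : z ∉ P) (hP : SurjOn f P P) :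
    SurjOn f (P ∩ Ioi z) (P ∩ Iio z) := by
  rintro _ ⟨hy, hyz⟩
  obtain ⟨x, hx, rfl⟩ := hP hy
  have hzx := not_lt.1 ((h.apply_lt_iff hz hx).1 hyz)
  exact ⟨x, ⟨hx, hzx.lt_of_ne fun e => hz (e ▸ hx)⟩, rfl⟩

theorem exists_of_not_switchesSides (h : ¬SwitchesSides f P z) :
    (∃ a ∈ P, a < z ∧ f a ≤ z) ∨
      (MapsTo f (P ∩ Iio z) (Ioi z) ∧ ∃ a ∈ P, z < a ∧ z ≤ f a) := by
  by_contra! hcon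
  have hleft : MapsTo f (P ∩ Iio z) (Ioi z) := fun x hx => hcon.1 x hx.1 hx.2
  exact h ⟨hleft, fun x hx => hcon.2 hleft x hx.1 hx.2⟩

theorem IsCycle.even_of_switchesSides (hP : IsCycle f n P) (hz : z ∉ P)
    (h : SwitchesSides f P z) : Even n := by
  obtain ⟨x, hx⟩ := hP.nonempty
  have hparity (i : ℕ) : f^[i] x < z ↔ (Even i ↔ x < z) := by
    induction i with
    | zero => simp
    | succ i ih =>
      rw [iterate_succ_apply', h.apply_lt_iff hz (hP.mapsTo.iterate i hx), ih, Nat.even_add_one]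
      tauto
  have hn := hparity n
  rw [hP.isPeriodicPt hx] at hn
  tauto

theorem exists_subset_uIcc_apply_of_surjOn {S T : Set X} (hT : T.Finite) (hne : T.Nonempty)
    (h : SurjOn f S T) : ∃ a ∈ S, ∃ b ∈ S, T ⊆ uIcc (f a) (f b) := by
  obtain ⟨s, hs, hmin⟩ := exists_min_image T id hT hne
  obtain ⟨t, ht, hmax⟩ := exists_max_image T id hT hne
  obtain ⟨a, ha, rfl⟩ := h hs
  obtain ⟨b, hb, rfl⟩ := h ht
  exact ⟨a, ha, b, hb, fun x hx => Icc_subset_uIcc ⟨hmin x hx, hmax x hx⟩⟩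

theorem IsCenter.exists_horseshoe (hc : IsCenter f P p z q) (hP : IsCycle f n P)
    (hright : ∀ x ∈ P, z < x → f x < x) (ha : a ∈ P) (hav : a ≤ v) (hvp : v < p)
    (hv : f v = z) (habove : ∀ t ∈ Ioc v p, z < f t) :
    ∃ w q', v < w ∧ w < z ∧ z < q' ∧ q' ≤ f w ∧ f q' < v := by
  obtain ⟨w, ⟨-, hvw, hwz⟩, hmax⟩ := exists_max_image (P ∩ Ioo v z) f
    (hP.finite.inter_of_left _) ⟨p, hc.left_mem, hvp, hc.left_lt⟩
  have hfpw : f p ≤ f w := hmax p ⟨hc.left_mem, hvp, hc.left_lt⟩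
  obtain ⟨q', ⟨hq', hvq', hq'w⟩, hout⟩ := hP.exists_mem_apply_notMem (S := Ioc v (f w))
    ⟨p, hc.left_mem, hvp, (hc.left_lt.trans hc.lt_right).le.trans (hc.right_le.trans hfpw)⟩
    fun hsub => (hsub ha).1.not_ge hav
  have hvz : v < z := hvp.trans hc.left_lt
  have hzq' : z < q' := by
    by_contra! hle
    have hlt : q' < z := hle.lt_of_ne fun h => hc.notMem (h ▸ hq')
    exact hout ⟨hvz.trans (habove q' ⟨hvq', hc.le_left_of_lt hq' hlt⟩), hmax q' ⟨hq', hvq', hlt⟩⟩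
  refine ⟨w, q', hvw, hwz, hzq', hq'w, lt_of_le_of_ne ?_ fun h => ?_⟩
  · exact not_lt.1 fun hlt => hout ⟨hlt, (hright q' hq' hzq').le.trans hq'w⟩
  · exact hc.notMem (hv ▸ hP.mapsTo (h ▸ hP.mapsTo hq'))

end Center

theorem lt_two_mul_of_dvd_add_two_mul {d j n : ℕ} (hn : Odd n) (hj : 0 < j)
    (hd : d ∣ n + 2 * j) (hlt : d < n + 2 * j) (h : 1 < d → n ≤ d) : d < 2 * j := by
  obtain ⟨c, hc⟩ := hd
  have hc3 : 3 ≤ c := by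
    obtain ⟨b, rfl⟩ : Odd c := (hn.add_even (even_two_mul j)).of_dvd_nat (hc ▸ dvd_mul_left c d)
    obtain rfl | hb := b.eq_zero_or_pos <;> omega
  have : d * 3 ≤ n + 2 * j := hc ▸ Nat.mul_le_mul_left d hc3
  omega

section LoopConfigurations

variable {X : Type*} [ConditionallyCompleteLinearOrder X] [TopologicalSpace X]
  [OrderTopology X] [DenselyOrdered X] {f : X → X} {k n : ℕ} {P : Set X} {a p q v w z : X}

theorem exists_isCenter (hf : Continuous f) (hP : P.Finite) (hne : P.Nonempty)
    (hmaps : MapsTo f P P) (hfix : ∀ x ∈ P, f x ≠ x) :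
    ∃ p z q, IsCenter f P p z q ∧ ∀ x ∈ P, z < x → f x < x := by
  obtain ⟨m, hm, hmin⟩ := exists_min_image P id hP hne
  obtain ⟨p, ⟨hp, hpf⟩, hpmax⟩ := exists_max_image {x ∈ P | x < f x} id (hP.sep _)
    ⟨m, hm, (hmin _ (hmaps hm)).lt_of_ne (hfix m hm).symm⟩
  obtain ⟨q, ⟨hq, hpq⟩, hqmin⟩ := exists_min_image {x ∈ P | p < x} id (hP.sep _)
    ⟨f p, hmaps hp, hpf⟩
  have hmove (x : X) (hx : x ∈ P) (hpx : p < x) : f x < x :=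
    (not_lt.1 fun hlt => (hpmax x ⟨hx, hlt⟩).not_gt hpx).lt_of_ne (hfix x hx)
  have hqfp : q ≤ f p := hqmin _ ⟨hmaps hp, hpf⟩
  have hfqp : f q ≤ p := not_lt.1 fun hlt => (hqmin _ ⟨hmaps hq, hlt⟩).not_gt (hmove q hq hpq)
  obtain ⟨z, hz, hfz⟩ := exists_mem_Icc_isFixedPt hf.continuousOn hpq.le hpf.le (hfqp.trans hpq.le)
  have hpz : p < z := hz.1.lt_of_ne fun h => hfix p hp (h ▸ hfz)
  have hzq : z < q := hz.2.lt_of_ne fun h => hfix q hq (h ▸ hfz)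
  exact ⟨p, z, q, ⟨hp, hq, hpz, hzq, hfz, hqfp, hfqp,
    fun x hx => or_iff_not_imp_left.2 fun hxp => hqmin x ⟨hx, not_le.1 hxp⟩⟩,
    fun x hx hzx => hmove x hx (hpz.trans hzx)⟩

theorem IsCycle.two_mem_periods_of_switchesSides (hf : Continuous f) (hP : IsCycle f n P)
    (hz : z ∉ P) (h : SwitchesSides f P z) : 2 ∈ periods f := by
  have hLR := h.surjOn_left hz hP.surjOn
  have hRL := h.surjOn_right hz hP.surjOn
  have hL : (P ∩ Iio z).Nonempty := by
    obtain ⟨x, hx⟩ := hP.nonempty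
    by_cases hxz : x < z
    exacts [⟨x, hx, hxz⟩, ⟨f x, hP.mapsTo hx, (h.apply_lt_iff hz hx).2 hxz⟩]
  have hR : (P ∩ Ioi z).Nonempty := hL.elim fun x hx => ⟨f x, hP.mapsTo hx.1, h.1 hx⟩
  obtain ⟨a₀, ha₀, b₀, hb₀, hsub₀⟩ :=
    exists_subset_uIcc_apply_of_surjOn (hP.finite.inter_of_left _) hR hLR
  obtain ⟨a₁, ha₁, b₁, hb₁, hsub₁⟩ :=
    exists_subset_uIcc_apply_of_surjOn (hP.finite.inter_of_left _) hL hRL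
  obtain ⟨x, hx, hmem⟩ := exists_isPeriodicPt_of_loop (n := 2) hf
    (a := fun i => if Even i then a₀ else a₁) (b := fun i => if Even i then b₀ else b₁) (by
      intro i _
      by_cases heven : Even i <;> simp only [heven, Nat.even_add_one, not_true_eq_false,
        not_false_eq_true, if_true, if_false]
      · exact uIcc_subset_uIcc (hsub₀ ha₁) (hsub₀ hb₁)
      · exact uIcc_subset_uIcc (hsub₁ ha₀) (hsub₁ hb₀)) (by simp) (by simp)
  refine mem_periods_of_isPeriodicPt two_pos hx fun d hd _ hd2 hfix => ?_
  obtain rfl : d = 1 := by have := hd.1; omega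
  have hxz : x < z := ordConnected_Iio.uIcc_subset ha₀.2 hb₀.2 (by simpa using hmem 0 two_pos.le)
  have hzx : z < f x := ordConnected_Ioi.uIcc_subset ha₁.2 hb₁.2 (by simpa using hmem 1 hd2.le)
  exact (hxz.trans hzx).ne' hfix

theorem two_mul_mem_periods_of_horseshoe (hf : Continuous f) (hvw : v < w) (hwz : w < z)
    (hzq : z < q) (hv : f v = z) (hw : f w = q) (hz : f z = z) (hq : f q < v) (hk : 0 < k) :
    2 * k ∈ periods f := by
  -- The loop is `[v, w]`, `[z, q]`, `[w, z]`, `[z, q]`, `[w, z]`, …, `[z, q]`; starting it at `v`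
  -- instead of `z` keeps its periodic point from closing up early.
  let e (i : ℕ) := if i = 0 ∨ i = 2 * k then v else z
  let y (i : ℕ) := if Even i then w else q
  have hez (i : ℕ) : f (e i) = z := by unfold e; split_ifs <;> assumption
  have hstep : ∀ i < 2 * k, e (i + 1) ∈ uIcc z (f (y i)) ∧ y (i + 1) ∈ uIcc z (f (y i)) := by
    intro i _
    obtain heven | hodd := Nat.even_or_odd i
    · have : e (i + 1) = z := if_neg (by grind)
      have : y (i + 1) = q := if_neg (by grind)
      have : y i = w := if_pos heven
      simp [*]
    · have : y (i + 1) = w := if_pos hodd.add_one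
      have : y i = q := if_neg (Nat.not_even_iff_odd.2 hodd)
      have : e (i + 1) = v ∨ e (i + 1) = z := ite_eq_or_eq ..
      have : v ∈ uIcc z (f q) := mem_uIcc_of_ge hq.le (hvw.trans hwz).le
      have : w ∈ uIcc z (f q) := mem_uIcc_of_ge (hq.trans hvw).le hwz.le
      grind [left_mem_uIcc]
  obtain ⟨x, hx, hmem⟩ := exists_isPeriodicPt_of_pinned_loop hf (fun i _ => hez i)
    (fun i hi => (hstep i hi).1) (fun i hi => (hstep i hi).2) (by simp [e]) (by simp [y])
  refine mem_periods_of_isPeriodicPt (by omega) hx fun d hd _ hlt hfix => ?_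
  have hxw : x ∈ Icc v w := by simpa [e, y, uIcc_of_le hvw.le] using hmem 0 (by omega)
  have hxd := hmem d hlt.le
  have hed : e d = z := if_neg (by have := hd.1; omega)
  rw [hfix, hed] at hxd
  obtain heven | hodd := Nat.even_or_odd d
  · have hx2 : f^[2] x ∈ uIcc z w := by
      simpa [e, y, show 2 ≠ 2 * k by grind] using hmem 2 (by grind)
    rw [show y d = w from if_pos heven, uIcc_of_ge hwz.le] at hxd
    obtain rfl : x = w := hxw.2.antisymm hxd.1
    rw [uIcc_of_ge hwz.le] at hx2
    refine (hq.trans hvw).not_ge (le_of_le_of_eq hx2.1 ?_)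
    exact congrArg f hw
  · rw [show y d = q from if_neg (Nat.not_even_iff_odd.2 hodd), uIcc_of_le hzq.le] at hxd
    exact (hxw.2.trans_lt hwz).not_ge hxd.1

theorem add_two_mul_mem_periods (hf : Continuous f) (hpz : p < z) (hzq : z < q) (hz : f z = z)
    (hp : q ≤ f p) (hq : f q ≤ p) (hn : IsLeast {d ∈ periods f | Odd d ∧ 1 < d} n)
    (hpn : IsPeriodicPt f n p) {i j : ℕ} (hi : i < n) (hiv : f^[i] p ≤ v) (hvz : v < z)
    (hv : f v = z) (hj : 0 < j) : n + 2 * j ∈ periods f := by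
  -- The loop passes `2 * j` times between `p` and `q` and then follows the orbit of `p` once;
  -- pinning it at `v` instead of `z` at time `2 * j + i` keeps its periodic point away from `z`.
  let e (t : ℕ) := if t = 2 * j + i then v else z
  -- Truncated subtraction makes this `p` at the even times before `2 * j`.
  let y (t : ℕ) := if t < 2 * j ∧ Odd t then q else f^[t - 2 * j] p
  have hfe (t : ℕ) : f (e t) = z := by unfold e; split_ifs <;> assumption
  have he (t : ℕ) : e t ∈ uIcc z (y t) := by
    obtain rfl | ht := eq_or_ne t (2 * j + i)
    · simp [e, y, mem_uIcc_of_ge hiv hvz.le]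
    · simp [e, ht]
  have hy (t : ℕ) : y (t + 1) ∈ uIcc z (f (y t)) := by
    obtain hlt | hle := lt_or_ge t (2 * j)
    · have hsub : t + 1 - 2 * j = 0 := by omega
      obtain heven | hodd := Nat.even_or_odd t
      · have : y t = p := by simp [y, Nat.not_odd_iff_even.2 heven, hlt.le]
        have : y (t + 1) = q := if_pos (by grind)
        simp [*, mem_uIcc_of_le hzq.le hp]
      · have : y t = q := if_pos ⟨hlt, hodd⟩
        have : y (t + 1) = p := by simp [y, Nat.not_odd_iff_even.2 hodd.add_one, hsub]
        simp [*, mem_uIcc_of_ge hq hpz.le]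
    · simp [y, hle.not_gt, (hle.trans t.le_succ).not_gt, Nat.succ_sub hle, iterate_succ_apply']
  obtain ⟨x, hx, hmem⟩ := exists_isPeriodicPt_of_pinned_loop (n := n + 2 * j) hf
    (fun t _ => hfe t) (fun t _ => uIcc_subset_uIcc left_mem_uIcc (hy t) (he (t + 1)))
    (fun t _ => hy t) (by grind) (by simp [y, hpn.eq])
  refine mem_periods_of_isPeriodicPt (by omega) hx fun d hd hdvd hlt hfix => ?_
  have hodd : Odd d := (hn.1.2.1.add_even (even_two_mul j)).of_dvd_nat hdvd
  have hdj : d < 2 * j :=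
    lt_two_mul_of_dvd_add_two_mul hn.1.2.1 hj hdvd hlt fun h1 => hn.2 ⟨hd, hodd, h1⟩
  have hx0 : x ∈ Icc p z := by
    simpa [e, y, hpz.le, show 0 ≠ 2 * j + i by omega] using hmem 0 (by omega)
  have hxd : x ∈ Icc z q := by
    simpa [hfix, e, y, hdj, hodd, show d ≠ 2 * j + i by omega, hzq.le] using hmem d hlt.le
  obtain rfl : x = z := hx0.2.antisymm hxd.1
  have hxv : x ∈ Icc (f^[i] p) v := by
    simpa [e, y, hiv, IsFixedPt.iterate hz (2 * j + i) |>.eq] using hmem (2 * j + i) (by omega)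
  exact hvz.not_ge hxv.2

theorem IsCenter.two_mul_mem_periods_of_left (hf : Continuous f) (hc : IsCenter f P p z q)
    (hP : IsCycle f n P) (hright : ∀ x ∈ P, z < x → f x < x) (ha : a ∈ P) (haz : a < z)
    (hfa : f a ≤ z) (hk : 0 < k) : 2 * k ∈ periods f := by
  have hzfp : z < f p := hc.lt_right.trans_le hc.right_le
  obtain ⟨v, ⟨hav, hvp⟩, hv, habove⟩ :=
    exists_last_preimage hf (hc.le_left_of_lt ha haz) hfa hzfp.le
  have hvp : v < p := hvp.lt_of_ne (by rintro rfl; exact hzfp.ne' hv)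
  obtain ⟨w, q', hvw, hwz, hzq', hq'w, hq'v⟩ :=
    hc.exists_horseshoe hP hright ha hav hvp hv habove
  obtain ⟨u, hu, hfu⟩ := intermediate_value_Icc' hwz.le hf.continuousOn
    ⟨hc.isFixedPt.eq.trans_le hzq'.le, hq'w⟩
  have huz : u < z := hu.2.lt_of_ne (by rintro rfl; exact hzq'.ne (hc.isFixedPt.symm.trans hfu))
  exact two_mul_mem_periods_of_horseshoe hf (hvw.trans_le hu.1) huz hzq' hv hfu hc.isFixedPt hq'v hk

theorem IsCenter.add_two_mul_mem_periods_of_left (hf : Continuous f) (hc : IsCenter f P p z q)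
    (hP : IsCycle f n P) (hn : IsLeast {d ∈ periods f | Odd d ∧ 1 < d} n) (ha : a ∈ P)
    (haz : a < z) (hfa : f a ≤ z) {j : ℕ} (hj : 0 < j) : n + 2 * j ∈ periods f := by
  obtain ⟨v, hv, hfv⟩ := intermediate_value_Icc (hc.le_left_of_lt ha haz) hf.continuousOn
    ⟨hfa, hc.lt_right.le.trans hc.right_le⟩
  obtain ⟨i, hi, rfl⟩ := hP.exists_iterate_eq p hc.left_mem a ha
  exact add_two_mul_mem_periods hf hc.left_lt hc.lt_right hc.isFixedPt hc.right_le hc.le_left hn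
    (hP.isPeriodicPt hc.left_mem) hi hv.1 (hv.2.trans_lt hc.left_lt) hfv hj

theorem IsCenter.two_mul_mem_periods (hf : Continuous f) (hc : IsCenter f P p z q)
    (hP : IsCycle f n P) (hright : ∀ x ∈ P, z < x → f x < x) (hns : ¬SwitchesSides f P z)
    (hk : 0 < k) : 2 * k ∈ periods f := by
  obtain ⟨a, ha, haz, hfa⟩ | ⟨hleft, a, ha, hza, hfa⟩ := exists_of_not_switchesSides hns
  · exact hc.two_mul_mem_periods_of_left hf hP hright ha haz hfa hk
  · rw [← periods_conj toDual]
    refine hc.dual.two_mul_mem_periods_of_left (a := toDual a)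
      (continuous_toDual.comp (hf.comp continuous_ofDual)) (hP.conj toDual) ?_
      (mem_image_of_mem _ ha) (toDual_lt_toDual.2 hza) (by simpa using hfa) hk
    rintro _ ⟨x, hx, rfl⟩ hxz
    have hxz : x < z := hxz
    simpa using hxz.trans (hleft ⟨hx, hxz⟩)

theorem IsCenter.add_two_mul_mem_periods (hf : Continuous f) (hc : IsCenter f P p z q)
    (hP : IsCycle f n P) (hn : IsLeast {d ∈ periods f | Odd d ∧ 1 < d} n)
    (hns : ¬SwitchesSides f P z) {j : ℕ} (hj : 0 < j) : n + 2 * j ∈ periods f := by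
  obtain ⟨a, ha, haz, hfa⟩ | ⟨-, a, ha, hza, hfa⟩ := exists_of_not_switchesSides hns
  · exact hc.add_two_mul_mem_periods_of_left hf hP hn ha haz hfa hj
  · rw [← periods_conj toDual] at hn ⊢
    exact hc.dual.add_two_mul_mem_periods_of_left (a := toDual a)
      (continuous_toDual.comp (hf.comp continuous_ofDual)) (hP.conj toDual) hn
      (mem_image_of_mem _ ha) (toDual_lt_toDual.2 hza) (by simpa using hfa) hj

end LoopConfigurations

section Forcing

variable {X : Type*} [ConditionallyCompleteLinearOrder X] [TopologicalSpace X]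
  [OrderTopology X] [DenselyOrdered X] {f : X → X} {k l m n r s : ℕ}

theorem exists_isCycle_isCenter (hf : Continuous f) (hn : n ∈ periods f) (h1 : 1 < n) :
    ∃ P p z q, IsCycle f n P ∧ IsCenter f P p z q ∧ ∀ x ∈ P, z < x → f x < x := by
  obtain ⟨P, hP⟩ := exists_isCycle hn
  obtain ⟨p, z, q, hc, hright⟩ :=
    exists_isCenter hf hP.finite hP.nonempty hP.mapsTo fun _ => hP.apply_ne h1
  exact ⟨P, p, z, q, hP, hc, hright⟩

theorem one_mem_periods (hf : Continuous f) (hn : n ∈ periods f) : 1 ∈ periods f := by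
  obtain rfl | h1 := Nat.eq_or_lt_of_le hn.1
  · exact hn
  · obtain ⟨P, p, z, q, -, hc, -⟩ := exists_isCycle_isCenter hf hn h1
    exact ⟨one_pos, z, minimalPeriod_eq_one_iff_isFixedPt.2 hc.isFixedPt⟩

theorem two_mem_periods (hf : Continuous f) (hn : n ∈ periods f) (h1 : 1 < n) :
    2 ∈ periods f := by
  obtain ⟨P, p, z, q, hP, hc, hright⟩ := exists_isCycle_isCenter hf hn h1
  by_cases hs : SwitchesSides f P z
  · exact hP.two_mem_periods_of_switchesSides hf hc.notMem hs
  · exact hc.two_mul_mem_periods hf hP hright hs one_pos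

theorem even_mem_periods_of_odd (hf : Continuous f) (hr : Odd r) (h1 : 1 < r)
    (h : r ∈ periods f) (hm : Even m) (hpos : 0 < m) : m ∈ periods f := by
  obtain ⟨P, p, z, q, hP, hc, hright⟩ := exists_isCycle_isCenter hf h h1
  have hs : ¬SwitchesSides f P z := fun hs =>
    Nat.not_even_iff_odd.2 hr (hP.even_of_switchesSides hc.notMem hs)
  obtain ⟨k, rfl⟩ := hm.two_dvd
  exact hc.two_mul_mem_periods hf hP hright hs (by omega)

theorem odd_mem_periods_of_odd_of_le (hf : Continuous f) (hr : Odd r) (h1 : 1 < r)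
    (h : r ∈ periods f) (hs : Odd s) (hrs : r ≤ s) : s ∈ periods f := by
  have hne : {d ∈ periods f | Odd d ∧ 1 < d}.Nonempty := ⟨r, h, hr, h1⟩
  obtain ⟨n, hn⟩ : ∃ n, IsLeast {d ∈ periods f | Odd d ∧ 1 < d} n :=
    ⟨_, Nat.sInf_mem hne, fun _ => Nat.sInf_le⟩
  obtain ⟨hnf, hodd, hn1⟩ := hn.1
  obtain rfl | hlt := ((hn.2 ⟨h, hr, h1⟩).trans hrs).eq_or_lt
  · exact hnf
  · obtain ⟨P, p, z, q, hP, hc, -⟩ := exists_isCycle_isCenter hf hnf hn1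
    have hns : ¬SwitchesSides f P z := fun hs =>
      Nat.not_even_iff_odd.2 hodd (hP.even_of_switchesSides hc.notMem hs)
    obtain ⟨j, rfl⟩ : ∃ j, s = n + 2 * j := by
      obtain ⟨j, hj⟩ := (Nat.Odd.sub_odd hs hodd).two_dvd
      exact ⟨j, by omega⟩
    exact hc.add_two_mul_mem_periods hf hP hn hns (by omega)

theorem two_pow_mul_mem_periods_of_exponent_lt (hf : Continuous f) (hr : Odd r) (h1 : 1 < r)
    (h : 2 ^ k * r ∈ periods f) (hkl : k < l) (hs : 0 < s) : 2 ^ l * s ∈ periods f := by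
  obtain ⟨j, rfl⟩ := Nat.exists_eq_add_of_lt hkl
  have heven : Even (2 ^ (j + 1) * s) := (even_two.pow_of_ne_zero j.succ_ne_zero).mul_right s
  have hrk : r ∈ periods f^[2 ^ k] := mem_periods_iterate_of_mul_mem (by positivity) h
  have := two_pow_mul_mem_periods_of_even heven
    (even_mem_periods_of_odd (hf.iterate _) hr h1 hrk heven (by positivity))
  rwa [← mul_assoc, ← pow_add, ← add_assoc] at this

theorem two_pow_mul_mem_periods_of_odd_of_le (hf : Continuous f) (hr : Odd r) (h1 : 1 < r)
    (h : 2 ^ k * r ∈ periods f) (hs : Odd s) (hrs : r ≤ s) : 2 ^ k * s ∈ periods f := by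
  have hrk : r ∈ periods f^[2 ^ k] := mem_periods_iterate_of_mul_mem (by positivity) h
  have hsk := odd_mem_periods_of_odd_of_le (hf.iterate _) hr h1 hrk hs hrs
  obtain ⟨d, hd, hgcd⟩ := exists_mul_mem_periods_of_iterate (by positivity) hsk
  obtain ⟨j, hjk, rfl⟩ := (Nat.dvd_prime_pow Nat.prime_two).1 (hgcd ▸ Nat.gcd_dvd_right _ _)
  obtain rfl | hlt := hjk.eq_or_lt
  · exact hd
  · exact two_pow_mul_mem_periods_of_exponent_lt hf hs (h1.trans_le hrs) hd hlt hs.pos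

theorem two_pow_mem_periods (hf : Continuous f) (hn : n ∈ periods f) (hnl : ¬n ∣ 2 ^ l) :
    2 ^ l ∈ periods f := by
  cases l with
  | zero => exact one_mem_periods hf hn
  | succ l =>
    have hdiv := div_gcd_mem_periods_iterate (m := 2 ^ l) (by positivity) hn
    have hne : n / n.gcd (2 ^ l) ≠ 1 := fun h =>
      hnl <| (Nat.eq_of_dvd_of_div_eq_one (Nat.gcd_dvd_left n _) h ▸ Nat.gcd_dvd_right n _).trans
        (pow_dvd_pow 2 l.le_succ)
    have := two_pow_mul_mem_periods_of_even even_two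
      (two_mem_periods (hf.iterate _) hdiv (lt_of_le_of_ne' hdiv.1 hne))
    rwa [← pow_succ] at this

end Forcing

section SharkovskyOrder

variable {m n : ℕ}

theorem two_pow_mul_oddPart (n : ℕ) : 2 ^ n.factorization 2 * oddPart n = n :=
  Nat.ordProj_mul_ordCompl_eq_self n 2

theorem odd_oddPart (hn : 0 < n) : Odd (oddPart n) := by
  rw [← Nat.not_even_iff_odd, even_iff_two_dvd]
  exact Nat.not_dvd_ordCompl Nat.prime_two hn.ne'

theorem oddPart_eq_one_iff : oddPart n = 1 ↔ ∃ k, n = 2 ^ k := by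
  constructor
  · intro h
    exact ⟨n.factorization 2, by simpa only [h, mul_one] using (two_pow_mul_oddPart n).symm⟩
  · rintro ⟨k, rfl⟩
    simp [oddPart, Nat.prime_two.factorization_pow]

theorem one_lt_oddPart (hn : 0 < n) (h : oddPart n ≠ 1) : 1 < oddPart n :=
  lt_of_le_of_ne' (odd_oddPart hn).pos h

theorem sharkLt_trichotomy (m n : ℕ) : SharkLt m n ∨ m = n ∨ SharkLt n m := by
  have heq : m.factorization 2 = n.factorization 2 → oddPart m = oddPart n → m = n := by
    intro h1 h2
    rw [← two_pow_mul_oddPart m, ← two_pow_mul_oddPart n, h1, h2]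
  unfold SharkLt
  grind

namespace SharkLt

theorem pos (h : SharkLt m n) : 0 < m := by
  rw [Nat.pos_iff_ne_zero]
  rintro rfl
  simp [SharkLt, oddPart] at h

theorem not_dvd (h : SharkLt m n) (hm : oddPart m = 1) : ¬n ∣ m := by
  intro hdvd
  have hn : oddPart n = 1 := by
    obtain ⟨k, rfl⟩ := oddPart_eq_one_iff.1 hm
    obtain ⟨j, -, hj⟩ := (Nat.dvd_prime_pow Nat.prime_two).1 hdvd
    exact oddPart_eq_one_iff.2 ⟨j, hj⟩
  have hmn : m < n := by simpa [SharkLt, hm, hn] using h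
  exact hmn.not_ge (Nat.le_of_dvd h.pos hdvd)

theorem mem_periods {X : Type*} [ConditionallyCompleteLinearOrder X] [TopologicalSpace X]
    [OrderTopology X] [DenselyOrdered X] {f : X → X} (h : SharkLt m n) (hf : Continuous f)
    (hn : n ∈ periods f) : m ∈ periods f := by
  by_cases hm : oddPart m = 1
  · obtain ⟨k, rfl⟩ := oddPart_eq_one_iff.1 hm
    exact two_pow_mem_periods hf hn (h.not_dvd hm)
  obtain ⟨hm1, -⟩ | ⟨hm1, -⟩ | ⟨-, hn1, hlevel⟩ := h
  · exact absurd hm1 hm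
  · exact absurd hm1 hm
  have hmpos : 0 < m := SharkLt.pos (Or.inr (Or.inr ⟨hm, hn1, hlevel⟩))
  have hodd := odd_oddPart hn.1
  have hone := one_lt_oddPart hn.1 hn1
  rw [← two_pow_mul_oddPart n] at hn
  rw [← two_pow_mul_oddPart m]
  obtain hlt | ⟨heq, hlt⟩ := hlevel
  · exact two_pow_mul_mem_periods_of_exponent_lt hf hodd hone hn hlt (odd_oddPart hmpos).pos
  · rw [heq]
    exact two_pow_mul_mem_periods_of_odd_of_le hf hodd hone hn (odd_oddPart hmpos) hlt.le

end SharkLt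

variable {A : Set ℕ}

theorem eq_sharkSegment_of_forall_not_sharkLt (hn : n ∈ A)
    (hdown : ∀ m, SharkLt m n → m ∈ A) (hmax : ∀ m ∈ A, ¬SharkLt n m) : A = sharkSegment n := by
  refine Subset.antisymm (fun m hm => ?_) ?_
  · obtain h | h | h := sharkLt_trichotomy m n
    exacts [Or.inl h, Or.inr h, absurd h (hmax m hm)]
  · rintro m (h | rfl)
    exacts [hdown m h, hn]

theorem exists_forall_not_sharkLt_of_oddPart_ne_one (h : ∃ n ∈ A, oddPart n ≠ 1) :
    ∃ n ∈ A, ∀ m ∈ A, ¬SharkLt n m := by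
  obtain ⟨n, ⟨hn, hn1⟩, hmin⟩ := exists_minimalFor_of_wellFoundedLT
    (fun n => n ∈ A ∧ oddPart n ≠ 1) (fun n => toLex (n.factorization 2, oddPart n)) h
  refine ⟨n, hn, fun m hm hlt => ?_⟩
  obtain ⟨h1, -⟩ | ⟨h1, -⟩ | ⟨-, hm1, hlevel⟩ := hlt
  · exact hn1 h1
  · exact hn1 h1
  · have hmn : toLex (m.factorization 2, oddPart m) < toLex (n.factorization 2, oddPart n) :=
      Prod.Lex.toLex_lt_toLex.2 (hlevel.imp_right fun h => ⟨h.1.symm, h.2⟩)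
    exact hmn.not_ge (hmin ⟨hm, hm1⟩ hmn.le)

theorem exists_forall_not_sharkLt_of_bddAbove (hA : A.Nonempty) (hbdd : BddAbove A)
    (hpow : ∀ n ∈ A, oddPart n = 1) : ∃ n ∈ A, ∀ m ∈ A, ¬SharkLt n m := by
  refine ⟨sSup A, Nat.sSup_mem hA hbdd, fun m hm hlt => ?_⟩
  have hlt : sSup A < m := by
    simpa [SharkLt, hpow m hm, hpow _ (Nat.sSup_mem hA hbdd)] using hlt
  exact hlt.not_ge (le_csSup hbdd hm)

theorem exists_eq_sharkSegment_or_eq_two_pow (hA : A.Nonempty)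
    (hdown : ∀ n ∈ A, ∀ m, SharkLt m n → m ∈ A) :
    (∃ n ∈ A, A = sharkSegment n) ∨ A = {m : ℕ | ∃ k, m = 2 ^ k} := by
  by_cases hmax : ∃ n ∈ A, ∀ m ∈ A, ¬SharkLt n m
  · obtain ⟨n, hn, hmax⟩ := hmax
    exact Or.inl ⟨n, hn, eq_sharkSegment_of_forall_not_sharkLt hn (hdown n hn) hmax⟩
  have hpow : ∀ n ∈ A, oddPart n = 1 := by
    by_contra! hne
    exact hmax (exists_forall_not_sharkLt_of_oddPart_ne_one hne)
  have hunbounded : ¬BddAbove A := fun hbdd =>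
    hmax (exists_forall_not_sharkLt_of_bddAbove hA hbdd hpow)
  refine Or.inr (Subset.antisymm (fun m hm => oddPart_eq_one_iff.1 (hpow m hm)) ?_)
  rintro _ ⟨k, rfl⟩
  obtain ⟨n, hn, hlt⟩ := not_bddAbove_iff.1 hunbounded (2 ^ k)
  exact hdown n hn _ (Or.inl ⟨oddPart_eq_one_iff.2 ⟨k, rfl⟩, hpow n hn, hlt⟩)

end SharkovskyOrder

theorem sharkovsky_real_line_general {X : Type*} [ConditionallyCompleteLinearOrder X]
    [TopologicalSpace X] [OrderTopology X] [DenselyOrdered X] (f : X → X) (hf : Continuous f) :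
    periods f = ∅ ∨ (∃ n : ℕ, 0 < n ∧ periods f = sharkSegment n) ∨
      periods f = {m : ℕ | ∃ k : ℕ, m = 2 ^ k} := by
  refine (periods f).eq_empty_or_nonempty.imp_right fun hne => ?_
  have hdown : ∀ n ∈ periods f, ∀ m, SharkLt m n → m ∈ periods f :=
    fun n hn m hmn => hmn.mem_periods hf hn
  exact (exists_eq_sharkSegment_or_eq_two_pow hne hdown).imp_left
    fun ⟨n, hn, heq⟩ => ⟨n, hn.1, heq⟩

/-- **Sharkovsky's Theorem for the real line.** For a continuous map `f : ℝ → ℝ` the set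
of periods of all cycles of `f` is empty or equals `S(n)` for some `n ∈ ℕ ∪ {2^∞}`. -/
theorem sharkovsky_real_line (f : ℝ → ℝ) (hf : Continuous f) :
    periodsOn f Set.univ = ∅ ∨
    (∃ n : ℕ, 0 < n ∧ periodsOn f Set.univ = sharkSegment n) ∨
    periodsOn f Set.univ = {m : ℕ | ∃ k : ℕ, m = 2 ^ k} := by
  have h : periodsOn f univ = periods f := by simp only [periodsOn, periods, mem_univ, true_and]
  exact h ▸ sharkovsky_real_line_general f hf
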